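/- arXiv:1805.09602 — 3 statements merged into one kernel-verified Lean document; each statement's English description precedes it below -/
import Mathlib

section
/- Let J₁⁻ denote the set of jobs in J⁻ that are the first job ever assigned to their respective bucket of table T⁻. There is an absolute constant c such that ∑_{j∈J₁⁻} α_j⁻ ≤ c·ε·∑_δ P^δ·W^δ, where the sum is over all integer density classes δ. -/
/-!
The sum of `α_j⁻` over the first jobs of the buckets of `T⁻` is controlled by two geometric
sums followed by a Hardy-type inequality.

Fix a density class `d`, and let `V_d = ∑_{i < d} W^i` be the sum of the peak weights of the
lower classes, so that `α_j⁻ ≤ p_j V_d` for every job `j` of class `d`. First jobs of class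
`d` and size class `s` lie in distinct buckets, hence have distinct values of `⌊α_j⁻⌋₂`;
their `α_j⁻` therefore sum to at most a constant times the largest possible value
`2^s V_d` (`AlgA.sum_class_size_le`). Membership in `J⁻` forces `w_j ≤ ε V_d`, that is
`p_j ≤ ε V_d 2^(-d)` (`AlgA.size_le`), so the geometric sum over `s` gives at most
`16 ε 2^(-d) V_d²` for class `d` (`AlgA.sum_class_le`).

It remains to compare `∑_d 2^(-d) V_d²` with `∑_d P^d W^d`. The discrete Hardy inequality
`hardy` (Cauchy–Schwarz with weights `(3/2)^i`, then an exchange of summation) bounds the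
former by `6 ∑_d 2^(-d) (W^d)²`, and `W^d ≤ 2^(d+1) P^d` because all densities in class `d`
are below `2^(d+1)`. Only the finitely many classes occurring in the instance matter, so
the sum over all integers is a finite sum.
-/

open Finset
open scoped Classical

noncomputable section

namespace NPSched

/-- The density `ρ_j = w_j / p_j` of job `j`. -/
def den (p : ℕ → ℕ) (w : ℕ → ℝ) (j : ℕ) : ℝ := w j / p j

/-- The density class `⌊ρ_j⌋₂` of job `j`: the largest integer `i` with `2 ^ i ≤ ρ_j`. -/
def cls (p : ℕ → ℕ) (w : ℕ → ℝ) (j : ℕ) : ℤ := Int.log 2 (den p w j)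

/-- Remaining size `p_j(t)` of job `j` at integer time `t` under schedule `sched`,
where `sched t` is the job (if any) processed during the slot `[t, t+1]`. -/
def rem (p : ℕ → ℕ) (sched : ℕ → Option ℕ) (j t : ℕ) : ℕ :=
  p j - ((Finset.range t).filter fun t' => sched t' = some j).card

/-- Remaining weight `w_j(t) = ρ_j · p_j(t)`. -/
def wrem (p : ℕ → ℕ) (w : ℕ → ℝ) (sched : ℕ → Option ℕ) (j t : ℕ) : ℝ :=
  den p w j * rem p sched j t

/-- Fractional weighted flow time `∑_{t ≥ r_j} w_j(t)` of job `j`. -/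
def fracFlow (r p : ℕ → ℕ) (w : ℕ → ℝ) (sched : ℕ → Option ℕ) (j : ℕ) : ℝ :=
  ∑' t : ℕ, if r j ≤ t then wrem p w sched j t else 0

/-- `s` is the first time at which job `j` is ever processed. -/
def isStart (sched : ℕ → Option ℕ) (j s : ℕ) : Prop :=
  sched s = some j ∧ ∀ s' < s, sched s' ≠ some j

/-- Active jobs `A(t)`: released by `t`, not immediately rejected, not yet finished. -/
def activeAt (J : Finset ℕ) (r p : ℕ → ℕ) (sched : ℕ → Option ℕ) (Jimm : Finset ℕ)
    (t : ℕ) : Finset ℕ :=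
  J.filter fun j => r j ≤ t ∧ j ∉ Jimm ∧ 0 < rem p sched j t

/-- The set `A(r_j)` of active jobs present when `j` arrives: jobs released strictly
earlier, or simultaneously but earlier in the fixed (index) order, that are neither
rejected nor finished.  (`j` itself is excluded.) -/
def arrSet (J : Finset ℕ) (r p : ℕ → ℕ) (sched : ℕ → Option ℕ) (Jimm : Finset ℕ)
    (j : ℕ) : Finset ℕ :=
  J.filter fun j' =>
    (r j' < r j ∨ (r j' = r j ∧ j' < j)) ∧ j' ∉ Jimm ∧ 0 < rem p sched j' (r j)

/-- `α_j`: the increase of total fractional weighted flow time caused by the arrival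
of `j`, had HDF been run on `A(r_j) ∪ {j}` from time `r_j` on. -/
def alpha (J : Finset ℕ) (r p : ℕ → ℕ) (w : ℕ → ℝ) (sched : ℕ → Option ℕ)
    (Jimm : Finset ℕ) (j : ℕ) : ℝ :=
  w j * ∑ j' ∈ (arrSet J r p sched Jimm j).filter (fun j' => den p w j ≤ den p w j'),
      (rem p sched j' (r j) : ℝ)
    + w j * p j / 2
    + p j * ∑ j' ∈ (arrSet J r p sched Jimm j).filter (fun j' => den p w j' < den p w j),
        wrem p w sched j' (r j)

/-- `α_j⁺`: the part of (the two sums of) `α_j` coming from jobs of density class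
at least `⌊ρ_j⌋₂`. -/
def alphaPlus (J : Finset ℕ) (r p : ℕ → ℕ) (w : ℕ → ℝ) (sched : ℕ → Option ℕ)
    (Jimm : Finset ℕ) (j : ℕ) : ℝ :=
  w j * ∑ j' ∈ (arrSet J r p sched Jimm j).filter
      (fun j' => cls p w j ≤ cls p w j' ∧ den p w j ≤ den p w j'),
      (rem p sched j' (r j) : ℝ)
    + p j * ∑ j' ∈ (arrSet J r p sched Jimm j).filter
        (fun j' => cls p w j ≤ cls p w j' ∧ den p w j' < den p w j),
        wrem p w sched j' (r j)

/-- `α_j⁻`: the contribution to `α_j` of jobs of density class strictly less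
than `⌊ρ_j⌋₂`. -/
def alphaMinus (J : Finset ℕ) (r p : ℕ → ℕ) (w : ℕ → ℝ) (sched : ℕ → Option ℕ)
    (Jimm : Finset ℕ) (j : ℕ) : ℝ :=
  p j * ∑ j' ∈ (arrSet J r p sched Jimm j).filter (fun j' => cls p w j' < cls p w j),
      wrem p w sched j' (r j)

/-- The set `J⁺` of jobs assigned to table `T⁺`. -/
def Jplus (J : Finset ℕ) (r p : ℕ → ℕ) (w : ℕ → ℝ) (sched : ℕ → Option ℕ)
    (Jimm : Finset ℕ) (ε : ℝ) : Finset ℕ :=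
  J.filter fun j => w j * p j / ε ≤ alphaPlus J r p w sched Jimm j

/-- The set `J⁻` of jobs assigned to table `T⁻`. -/
def Jminus (J : Finset ℕ) (r p : ℕ → ℕ) (w : ℕ → ℝ) (sched : ℕ → Option ℕ)
    (Jimm : Finset ℕ) (ε : ℝ) : Finset ℕ :=
  J.filter fun j => w j * p j / ε < alphaMinus J r p w sched Jimm j

/-- The bucket `(⌊α_j⁺/w_j⌋₂, ⌊w_j⌋₂)` of table `T⁺` to which a job of `J⁺` is assigned. -/
def bucketPlus (J : Finset ℕ) (r p : ℕ → ℕ) (w : ℕ → ℝ) (sched : ℕ → Option ℕ)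
    (Jimm : Finset ℕ) (j : ℕ) : ℤ × ℤ :=
  (Int.log 2 (alphaPlus J r p w sched Jimm j / w j), Int.log 2 (w j))

/-- The bucket `(⌊α_j⁻⌋₂, ⌊ρ_j⌋₂, ⌊p_j⌋₂)` of table `T⁻` to which a job of `J⁻` is assigned. -/
def bucketMinus (J : Finset ℕ) (r p : ℕ → ℕ) (w : ℕ → ℝ) (sched : ℕ → Option ℕ)
    (Jimm : Finset ℕ) (j : ℕ) : ℤ × ℤ × ℤ :=
  (Int.log 2 (alphaMinus J r p w sched Jimm j), cls p w j, Int.log 2 ((p j : ℝ)))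

/-- `j'` arrives no later than `j` (simultaneous arrivals ordered by index). -/
def arrLE (r : ℕ → ℕ) (j' j : ℕ) : Prop :=
  r j' < r j ∨ (r j' = r j ∧ j' ≤ j)

/-- The (1-based) position of `j` in the arrival order of its bucket of `T⁺`. -/
def rankPlus (J : Finset ℕ) (r p : ℕ → ℕ) (w : ℕ → ℝ) (sched : ℕ → Option ℕ)
    (Jimm : Finset ℕ) (ε : ℝ) (j : ℕ) : ℕ :=
  ((Jplus J r p w sched Jimm ε).filter fun j' =>
    bucketPlus J r p w sched Jimm j' = bucketPlus J r p w sched Jimm j ∧ arrLE r j' j).card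

/-- The (1-based) position of `j` in the arrival order of its bucket of `T⁻`. -/
def rankMinus (J : Finset ℕ) (r p : ℕ → ℕ) (w : ℕ → ℝ) (sched : ℕ → Option ℕ)
    (Jimm : Finset ℕ) (ε : ℝ) (j : ℕ) : ℕ :=
  ((Jminus J r p w sched Jimm ε).filter fun j' =>
    bucketMinus J r p w sched Jimm j' = bucketMinus J r p w sched Jimm j ∧ arrLE r j' j).card

/-- An execution of algorithm `A` on a job instance `(J, r, p, w)` with parameter
`ε` (where `k = 1/ε` is a positive integer): the data consists of the schedule
(`sched t` is the job processed in slot `[t, t+1]`), the set `Jimm` of immediately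
rejected jobs, and the growing set `L t` of preemptible jobs; the fields below
axiomatise exactly the rules of algorithm `A`. -/
structure AlgA where
  /-- the (finite) set of jobs -/
  J : Finset ℕ
  /-- release times -/
  r : ℕ → ℕ
  /-- sizes -/
  p : ℕ → ℕ
  /-- weights -/
  w : ℕ → ℝ
  /-- the parameter ε -/
  ε : ℝ
  /-- `k = 1/ε`, a positive integer -/
  k : ℕ
  /-- the schedule produced by algorithm `A` -/
  sched : ℕ → Option ℕ
  /-- the set `J^imm` of immediately rejected jobs -/
  Jimm : Finset ℕ
  /-- `L t` : the set of preemptible jobs at time `t` -/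
  L : ℕ → Finset ℕ
  hp : ∀ j ∈ J, 0 < p j
  hw : ∀ j ∈ J, 0 < w j
  hε : 0 < ε
  hε2 : ε ^ 2 ≤ 1 / 2
  hk : (k : ℝ) = 1 / ε
  /-- immediate rejections: in each bucket of `T⁺` the first job and every
  `(1/ε)`-th job thereafter (positions `1, 1 + k, 1 + 2k, …`), and in each bucket
  of `T⁻` every `(1/ε)`-th job (positions `k, 2k, …`), are rejected on arrival. -/
  hJimm : ∀ j, j ∈ Jimm ↔ j ∈ J ∧
    ((j ∈ Jplus J r p w sched Jimm ε ∧ rankPlus J r p w sched Jimm ε j % k = 1 % k) ∨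
     (j ∈ Jminus J r p w sched Jimm ε ∧ rankMinus J r p w sched Jimm ε j % k = 0))
  hL0 : L 0 = ∅
  /-- a job enters `L` when the weight released since it started processing
  exceeds `w_j / ε`; once in `L` it stays in `L`. -/
  hLsucc : ∀ t j, j ∈ L (t + 1) ↔ j ∈ L t ∨
    (sched t = some j ∧ ∃ s, isStart sched j s ∧
      w j / ε < ∑ j' ∈ J.filter (fun j' => s < r j' ∧ r j' ≤ t + 1), w j')
  /-- only active jobs are processed -/
  hvalid : ∀ t j, sched t = some j → j ∈ activeAt J r p sched Jimm t
  /-- a running job that is unfinished and not preemptible keeps running -/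
  hcont : ∀ t j, sched t = some j → 0 < rem p sched j (t + 1) → j ∉ L (t + 1) →
    sched (t + 1) = some j
  /-- initially, a highest-density active job is processed (if any job is active) -/
  hHDF0 : (activeAt J r p sched Jimm 0 = ∅ ∧ sched 0 = none) ∨
    ∃ j, sched 0 = some j ∧ ∀ j' ∈ activeAt J r p sched Jimm 0, den p w j' ≤ den p w j
  /-- whenever the previous job has finished or become preemptible (or no job was
  running), a highest-density active job is processed (if any job is active) -/
  hHDFsucc : ∀ t, (∀ j, sched t = some j → rem p sched j (t + 1) = 0 ∨ j ∈ L (t + 1)) →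
    (activeAt J r p sched Jimm (t + 1) = ∅ ∧ sched (t + 1) = none) ∨
    ∃ j, sched (t + 1) = some j ∧
      ∀ j' ∈ activeAt J r p sched Jimm (t + 1), den p w j' ≤ den p w j
  /-- every job that is not immediately rejected is eventually finished by `A` -/
  hdone : ∀ j ∈ J, j ∉ Jimm → ∃ T, rem p sched j T = 0



/-- `A^δ(t)`: the active jobs of density class `δ` at time `t`. -/
def Ad (J : Finset ℕ) (r p : ℕ → ℕ) (w : ℕ → ℝ) (sched : ℕ → Option ℕ)
    (Jimm : Finset ℕ) (δ : ℤ) (t : ℕ) : Finset ℕ :=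
  (activeAt J r p sched Jimm t).filter fun j => cls p w j = δ

/-- `P^δ(t)`: the total remaining size of the active class-`δ` jobs at time `t`. -/
def Pd (J : Finset ℕ) (r p : ℕ → ℕ) (w : ℕ → ℝ) (sched : ℕ → Option ℕ)
    (Jimm : Finset ℕ) (δ : ℤ) (t : ℕ) : ℝ :=
  ∑ j ∈ Ad J r p w sched Jimm δ t, (rem p sched j t : ℝ)

/-- `W^δ(t)`: the total remaining weight of the active class-`δ` jobs at time `t`. -/
def Wd (J : Finset ℕ) (r p : ℕ → ℕ) (w : ℕ → ℝ) (sched : ℕ → Option ℕ)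
    (Jimm : Finset ℕ) (δ : ℤ) (t : ℕ) : ℝ :=
  ∑ j ∈ Ad J r p w sched Jimm δ t, wrem p w sched j t

/-- `P^δ = max_t P^δ(t)`. -/
def Pmax (J : Finset ℕ) (r p : ℕ → ℕ) (w : ℕ → ℝ) (sched : ℕ → Option ℕ)
    (Jimm : Finset ℕ) (δ : ℤ) : ℝ :=
  ⨆ t : ℕ, Pd J r p w sched Jimm δ t

/-- `W^δ = max_t W^δ(t)`. -/
def Wmax (J : Finset ℕ) (r p : ℕ → ℕ) (w : ℕ → ℝ) (sched : ℕ → Option ℕ)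
    (Jimm : Finset ℕ) (δ : ℤ) : ℝ :=
  ⨆ t : ℕ, Wd J r p w sched Jimm δ t

/-! ### Geometric sums and a Hardy-type inequality -/

/-- A sum of distinct integer powers of `q > 1` is at most `q / (q - 1)` times any
upper bound on the individual terms. -/
lemma sum_zpow_le {q : ℝ} (hq : 1 < q) (S : Finset ℤ) :
    ∀ B : ℝ, 0 ≤ B → (∀ i ∈ S, q ^ i ≤ B) → ∑ i ∈ S, q ^ i ≤ q / (q - 1) * B := by
  have hq1 : 0 < q - 1 := by linarith
  have hq0 : 0 < q := by linarith
  induction S using Finset.induction_on_max with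
  | empty =>
    intro B hB _
    simp only [Finset.sum_empty]
    positivity
  | insert a s has ih =>
    intro B _ h
    rw [Finset.sum_insert (fun hmem => lt_irrefl _ (has a hmem))]
    -- every exponent in `s` is at most `a - 1`
    have h1 := ih (q ^ (a - 1)) (by positivity)
      (fun i hi => zpow_le_zpow_right₀ hq.le (by have := has i hi; omega))
    have h2 : q / (q - 1) * q ^ (a - 1) = q ^ a / (q - 1) := by
      rw [zpow_sub_one₀ hq0.ne']; field_simp
    have h3 : q ^ a + q ^ a / (q - 1) = q / (q - 1) * q ^ a := by
      field_simp; ring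
    calc q ^ a + ∑ i ∈ s, q ^ i ≤ q ^ a + q ^ a / (q - 1) := by linarith
      _ = q / (q - 1) * q ^ a := h3
      _ ≤ q / (q - 1) * B :=
        mul_le_mul_of_nonneg_left (h a (Finset.mem_insert_self _ _)) (by positivity)

lemma sum_two_zpow_le_of_injOn {ι : Type*} (S : Finset ι) (f : ι → ℤ)
    (hf : Set.InjOn f S) (B : ℝ) (hB : 0 ≤ B) (h : ∀ i ∈ S, (2 : ℝ) ^ f i ≤ B) :
    ∑ i ∈ S, (2 : ℝ) ^ f i ≤ 2 * B := by
  have h1 := sum_zpow_le (q := 2) (by norm_num) (S.image f) B hB (by simpa using h)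
  rw [Finset.sum_image hf] at h1
  linarith

/-- Cauchy–Schwarz with the weights `(3/2)^i`: the square of an initial sum is bounded
by a geometrically discounted sum of squares. -/
lemma sq_sum_lt_le (D : Finset ℤ) (W : ℤ → ℝ) (d : ℤ) :
    (∑ i ∈ D with i < d, W i) ^ 2 ≤
      2 * (3 / 2 : ℝ) ^ d * ∑ i ∈ D with i < d, (3 / 2 : ℝ) ^ (-i) * W i ^ 2 := by
  have h1 := Finset.sum_sq_le_sum_mul_sum_of_sq_le_mul (D.filter (· < d)) (r := W)
    (f := fun i => (3 / 2 : ℝ) ^ i) (g := fun i => (3 / 2 : ℝ) ^ (-i) * W i ^ 2)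
    (fun i _ => by positivity) (fun i _ => by positivity)
    (fun i _ => by
      rw [← mul_assoc, ← zpow_add₀ (by norm_num)]; simp)
  have h2 := sum_zpow_le (q := 3 / 2) (by norm_num) (D.filter (· < d)) ((3 / 2) ^ (d - 1))
    (by positivity) (fun i hi => zpow_le_zpow_right₀ (by norm_num)
      (by have := (Finset.mem_filter.1 hi).2; omega))
  rw [zpow_sub_one₀ (by norm_num)] at h2
  refine h1.trans (mul_le_mul_of_nonneg_right ?_ (Finset.sum_nonneg fun i _ => by positivity))
  linarith

/-- A discrete Hardy inequality for the weights `2^(-d)`. -/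
lemma hardy (D : Finset ℤ) (W : ℤ → ℝ) :
    ∑ d ∈ D, (2 : ℝ) ^ (-d) * (∑ i ∈ D with i < d, W i) ^ 2 ≤
      6 * ∑ d ∈ D, (2 : ℝ) ^ (-d) * W d ^ 2 := by
  have key : ∀ i : ℤ, ∑ d ∈ D with i < d, (3 / 4 : ℝ) ^ d ≤ 3 * (3 / 4 : ℝ) ^ i := by
    intro i
    have h := sum_zpow_le (q := 4 / 3) (by norm_num) ((D.filter (i < ·)).image (fun d => -d))
      ((4 / 3) ^ (-i - 1)) (by positivity) (by
        intro e he
        obtain ⟨d, hd, rfl⟩ := Finset.mem_image.1 he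
        exact zpow_le_zpow_right₀ (by norm_num)
          (by have := (Finset.mem_filter.1 hd).2; omega))
    rw [Finset.sum_image (fun _ _ _ _ h => neg_injective h), zpow_sub_one₀ (by norm_num)] at h
    have h34 : ∀ d : ℤ, (4 / 3 : ℝ) ^ (-d) = (3 / 4 : ℝ) ^ d := by
      intro d
      rw [zpow_neg, ← inv_zpow]; norm_num
    simp only [h34] at h
    linarith
  calc ∑ d ∈ D, (2 : ℝ) ^ (-d) * (∑ i ∈ D with i < d, W i) ^ 2
      ≤ ∑ d ∈ D, (2 : ℝ) ^ (-d) *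
          (2 * (3 / 2 : ℝ) ^ d * ∑ i ∈ D with i < d, (3 / 2 : ℝ) ^ (-i) * W i ^ 2) :=
        Finset.sum_le_sum fun d _ =>
          mul_le_mul_of_nonneg_left (sq_sum_lt_le D W d) (by positivity)
    _ = ∑ d ∈ D, ∑ i ∈ D, if i < d then
          2 * (3 / 4 : ℝ) ^ d * ((3 / 2 : ℝ) ^ (-i) * W i ^ 2) else 0 := by
        refine Finset.sum_congr rfl fun d _ => ?_
        have : (2 : ℝ) ^ (-d) * (3 / 2 : ℝ) ^ d = (3 / 4 : ℝ) ^ d := by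
          rw [zpow_neg, ← inv_zpow, ← mul_zpow]; norm_num
        rw [← Finset.sum_filter, ← Finset.mul_sum, ← this]
        ring
    _ = ∑ i ∈ D, ∑ d ∈ D, if i < d then
          2 * (3 / 4 : ℝ) ^ d * ((3 / 2 : ℝ) ^ (-i) * W i ^ 2) else 0 := Finset.sum_comm
    _ = ∑ i ∈ D, 2 * (∑ d ∈ D with i < d, (3 / 4 : ℝ) ^ d) *
          ((3 / 2 : ℝ) ^ (-i) * W i ^ 2) := by
        refine Finset.sum_congr rfl fun i _ => ?_
        rw [← Finset.sum_filter, Finset.mul_sum, Finset.sum_mul]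
    _ ≤ ∑ i ∈ D, 2 * (3 * (3 / 4 : ℝ) ^ i) * ((3 / 2 : ℝ) ^ (-i) * W i ^ 2) := by
        refine Finset.sum_le_sum fun i _ => ?_
        refine mul_le_mul_of_nonneg_right ?_ (by positivity)
        linarith [key i]
    _ = 6 * ∑ d ∈ D, (2 : ℝ) ^ (-d) * W d ^ 2 := by
        rw [Finset.mul_sum]
        refine Finset.sum_congr rfl fun i _ => ?_
        have : (2 : ℝ) ^ (-i) = (3 / 4 : ℝ) ^ i * (3 / 2 : ℝ) ^ (-i) := by
          rw [zpow_neg, zpow_neg, ← inv_zpow, ← inv_zpow, ← mul_zpow]; norm_num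
        rw [this]; ring

/-! ### Class weights and class volumes of an execution -/

namespace AlgA

variable (A : AlgA)

lemma den_pos {j : ℕ} (hj : j ∈ A.J) : 0 < den A.p A.w j :=
  div_pos (A.hw j hj) (by exact_mod_cast A.hp j hj)

lemma wrem_nonneg {j : ℕ} (hj : j ∈ A.J) (t : ℕ) : 0 ≤ wrem A.p A.w A.sched j t :=
  mul_nonneg (A.den_pos hj).le (Nat.cast_nonneg _)

lemma rem_le (j t : ℕ) : (rem A.p A.sched j t : ℝ) ≤ A.p j := by
  exact_mod_cast Nat.sub_le _ _

lemma mem_J_of_mem_Ad {d : ℤ} {t j : ℕ} (h : j ∈ Ad A.J A.r A.p A.w A.sched A.Jimm d t) :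
    j ∈ A.J :=
  (Finset.mem_filter.1 (Finset.mem_filter.1 h).1).1

lemma Pd_le_Pmax (d : ℤ) (t : ℕ) :
    Pd A.J A.r A.p A.w A.sched A.Jimm d t ≤ Pmax A.J A.r A.p A.w A.sched A.Jimm d := by
  refine le_ciSup (f := fun t => Pd A.J A.r A.p A.w A.sched A.Jimm d t)
    ⟨∑ j ∈ A.J, (A.p j : ℝ), ?_⟩ t
  rintro _ ⟨s, rfl⟩
  calc Pd A.J A.r A.p A.w A.sched A.Jimm d s
      ≤ ∑ j ∈ Ad A.J A.r A.p A.w A.sched A.Jimm d s, (A.p j : ℝ) :=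
        Finset.sum_le_sum fun j _ => A.rem_le j s
    _ ≤ _ := Finset.sum_le_sum_of_subset_of_nonneg (fun j hj => A.mem_J_of_mem_Ad hj)
        (fun _ _ _ => Nat.cast_nonneg _)

lemma Wd_nonneg (d : ℤ) (t : ℕ) : 0 ≤ Wd A.J A.r A.p A.w A.sched A.Jimm d t :=
  Finset.sum_nonneg fun _ hj => A.wrem_nonneg (A.mem_J_of_mem_Ad hj) t

lemma Wd_le_Pmax (d : ℤ) (t : ℕ) :
    Wd A.J A.r A.p A.w A.sched A.Jimm d t ≤
      2 * 2 ^ d * Pmax A.J A.r A.p A.w A.sched A.Jimm d := by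
  refine le_trans ?_ (mul_le_mul_of_nonneg_left (A.Pd_le_Pmax d t) (by positivity))
  rw [Pd, Finset.mul_sum]
  refine Finset.sum_le_sum fun j hj => mul_le_mul_of_nonneg_right ?_ (Nat.cast_nonneg _)
  have h := Int.lt_zpow_succ_log_self (b := 2) (by norm_num) (den A.p A.w j)
  have hd : Int.log 2 (den A.p A.w j) = d := (Finset.mem_filter.1 hj).2
  rw [hd, zpow_add_one₀ (by norm_num)] at h
  push_cast at h
  linarith

lemma Wd_le_Wmax (d : ℤ) (t : ℕ) :
    Wd A.J A.r A.p A.w A.sched A.Jimm d t ≤ Wmax A.J A.r A.p A.w A.sched A.Jimm d := by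
  refine le_ciSup (f := fun t => Wd A.J A.r A.p A.w A.sched A.Jimm d t)
    ⟨2 * 2 ^ d * Pmax A.J A.r A.p A.w A.sched A.Jimm d, ?_⟩ t
  rintro _ ⟨s, rfl⟩
  exact A.Wd_le_Pmax d s

lemma Wmax_le_Pmax (d : ℤ) :
    Wmax A.J A.r A.p A.w A.sched A.Jimm d ≤
      2 * 2 ^ d * Pmax A.J A.r A.p A.w A.sched A.Jimm d :=
  ciSup_le fun t => A.Wd_le_Pmax d t

lemma Wmax_nonneg (d : ℤ) : 0 ≤ Wmax A.J A.r A.p A.w A.sched A.Jimm d :=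
  (A.Wd_nonneg d 0).trans (A.Wd_le_Wmax d 0)

/-- The finite set of density classes occurring in the instance. -/
def classes : Finset ℤ := A.J.image (cls A.p A.w)

/-- The sum of the peak weights `W^i` over all occurring classes `i < d`; it bounds the
total remaining weight of the classes below `d` at every time. -/
def lowW (d : ℤ) : ℝ :=
  ∑ i ∈ A.classes with i < d, Wmax A.J A.r A.p A.w A.sched A.Jimm i

lemma lowW_nonneg (d : ℤ) : 0 ≤ A.lowW d :=
  Finset.sum_nonneg fun i _ => A.Wmax_nonneg i

lemma Wmax_eq_zero {d : ℤ} (hd : d ∉ A.classes) :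
    Wmax A.J A.r A.p A.w A.sched A.Jimm d = 0 := by
  have h : ∀ t, Wd A.J A.r A.p A.w A.sched A.Jimm d t = 0 := by
    intro t
    refine Finset.sum_eq_zero fun j hj => absurd ?_ hd
    exact Finset.mem_image.2 ⟨j, A.mem_J_of_mem_Ad hj, (Finset.mem_filter.1 hj).2⟩
  simp [Wmax, h]

lemma alphaMinus_le (j : ℕ) :
    alphaMinus A.J A.r A.p A.w A.sched A.Jimm j ≤ A.p j * A.lowW (cls A.p A.w j) := by
  refine mul_le_mul_of_nonneg_left ?_ (Nat.cast_nonneg _)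
  set S := (arrSet A.J A.r A.p A.sched A.Jimm j).filter
    (fun j' => cls A.p A.w j' < cls A.p A.w j) with hS
  have hmem : ∀ x ∈ S, x ∈ A.J ∧ x ∈ activeAt A.J A.r A.p A.sched A.Jimm (A.r j) ∧
      cls A.p A.w x < cls A.p A.w j := by
    intro x hx
    obtain ⟨h1, h2⟩ := Finset.mem_filter.1 hx
    obtain ⟨h3, h4, h5⟩ := Finset.mem_filter.1 h1
    exact ⟨h3, Finset.mem_filter.2 ⟨h3, by omega, h5⟩, h2⟩
  rw [← Finset.sum_fiberwise_of_maps_to (s := S) (g := cls A.p A.w)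
    (t := A.classes.filter (· < cls A.p A.w j)) (fun x hx => Finset.mem_filter.2
      ⟨Finset.mem_image_of_mem _ (hmem x hx).1, (hmem x hx).2.2⟩)]
  refine Finset.sum_le_sum fun i _ => le_trans ?_ (A.Wd_le_Wmax i (A.r j))
  refine Finset.sum_le_sum_of_subset_of_nonneg ?_
    (fun x hx _ => A.wrem_nonneg (A.mem_J_of_mem_Ad hx) _)
  intro x hx
  obtain ⟨h1, h2⟩ := Finset.mem_filter.1 hx
  exact Finset.mem_filter.2 ⟨(hmem x h1).2.1, h2⟩

/-! ### First jobs of the buckets of `T⁻` -/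

/-- The set `J₁⁻` of jobs that are the first in their bucket of `T⁻`. -/
def firstMinus : Finset ℕ :=
  (Jminus A.J A.r A.p A.w A.sched A.Jimm A.ε).filter
    (fun j => rankMinus A.J A.r A.p A.w A.sched A.Jimm A.ε j = 1)

lemma mem_J_of_first {j : ℕ} (hj : j ∈ A.firstMinus) : j ∈ A.J :=
  (Finset.mem_filter.1 (Finset.mem_filter.1 hj).1).1

lemma lt_alphaMinus_of_first {j : ℕ} (hj : j ∈ A.firstMinus) :
    A.w j * A.p j / A.ε < alphaMinus A.J A.r A.p A.w A.sched A.Jimm j :=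
  (Finset.mem_filter.1 (Finset.mem_filter.1 hj).1).2

lemma alphaMinus_pos {j : ℕ} (hj : j ∈ A.firstMinus) :
    0 < alphaMinus A.J A.r A.p A.w A.sched A.Jimm j := by
  have h1 := A.hw j (A.mem_J_of_first hj)
  have h2 : (0 : ℝ) < A.p j := by exact_mod_cast A.hp j (A.mem_J_of_first hj)
  have h3 := A.hε
  exact lt_trans (by positivity) (A.lt_alphaMinus_of_first hj)

lemma bucketMinus_injOn :
    Set.InjOn (bucketMinus A.J A.r A.p A.w A.sched A.Jimm) A.firstMinus := by
  -- the later of two jobs of one bucket has rank at least two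
  have aux : ∀ x ∈ A.firstMinus, ∀ y ∈ A.firstMinus, arrLE A.r x y →
      bucketMinus A.J A.r A.p A.w A.sched A.Jimm x =
        bucketMinus A.J A.r A.p A.w A.sched A.Jimm y → x = y := by
    intro x hx y hy hxy hb
    obtain ⟨hy1, hy2⟩ := Finset.mem_filter.1 hy
    refine Finset.card_le_one.1 hy2.le x ?_ y ?_
    · exact Finset.mem_filter.2 ⟨(Finset.mem_filter.1 hx).1, hb, hxy⟩
    · exact Finset.mem_filter.2 ⟨hy1, rfl, Or.inr ⟨rfl, le_rfl⟩⟩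
  intro x hx y hy hb
  have htot : arrLE A.r x y ∨ arrLE A.r y x := by
    unfold arrLE; omega
  rcases htot with h | h
  · exact aux x hx y hy h hb
  · exact (aux y hy x hx h hb.symm).symm

/-- Since `α_j⁻ > w_j p_j / ε`, the weight of `j` is at most `ε` times the lower-class
weight, which bounds the size of `j`. -/
lemma size_le {j : ℕ} (hj : j ∈ A.firstMinus) :
    (A.p j : ℝ) ≤ A.ε * A.lowW (cls A.p A.w j) * 2 ^ (-cls A.p A.w j) := by
  have hJ := A.mem_J_of_first hj
  have hp : (0 : ℝ) < A.p j := by exact_mod_cast A.hp j hJ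
  have h1 := (A.lt_alphaMinus_of_first hj).trans_le (A.alphaMinus_le j)
  rw [div_lt_iff₀ A.hε] at h1
  have h2 : A.w j ≤ A.ε * A.lowW (cls A.p A.w j) := by
    refine le_of_mul_le_mul_right (a := (A.p j : ℝ)) ?_ hp
    linarith
  have h3 : (2 : ℝ) ^ cls A.p A.w j ≤ den A.p A.w j := by
    have := Int.zpow_log_le_self (b := 2) (by norm_num) (A.den_pos hJ)
    exact_mod_cast this
  rw [den, le_div_iff₀ hp] at h3
  rw [zpow_neg, ← div_eq_mul_inv, le_div_iff₀ (by positivity)]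
  linarith

/-- For fixed density class `d` and size class `s` the first jobs have distinct values
`⌊α_j⁻⌋₂`, so their `α_j⁻` form a geometric sum dominated by its largest term. -/
lemma sum_class_size_le (d s : ℤ) :
    ∑ j ∈ A.firstMinus with cls A.p A.w j = d ∧ Int.log 2 (A.p j : ℝ) = s,
      alphaMinus A.J A.r A.p A.w A.sched A.Jimm j ≤ 8 * 2 ^ s * A.lowW d := by
  set S := A.firstMinus.filter
    (fun j => cls A.p A.w j = d ∧ Int.log 2 (A.p j : ℝ) = s) with hS
  set a : ℕ → ℤ := fun j => Int.log 2 (alphaMinus A.J A.r A.p A.w A.sched A.Jimm j) with ha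
  have hV := A.lowW_nonneg d
  have hinj : Set.InjOn a S := by
    intro x hx y hy hxy
    obtain ⟨hx1, hx2, hx3⟩ := Finset.mem_filter.1 hx
    obtain ⟨hy1, hy2, hy3⟩ := Finset.mem_filter.1 hy
    refine A.bucketMinus_injOn hx1 hy1 ?_
    simp only [bucketMinus, Prod.mk.injEq]
    exact ⟨hxy, hx2.trans hy2.symm, hx3.trans hy3.symm⟩
  have hbound : ∀ j ∈ S, (2 : ℝ) ^ a j ≤ 2 * 2 ^ s * A.lowW d := by
    intro j hj
    obtain ⟨h1, h2, h3⟩ := Finset.mem_filter.1 hj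
    have h4 : (2 : ℝ) ^ a j ≤ alphaMinus A.J A.r A.p A.w A.sched A.Jimm j := by
      have := Int.zpow_log_le_self (b := 2) (by norm_num) (A.alphaMinus_pos h1)
      exact_mod_cast this
    have h5 := A.alphaMinus_le j
    have h6 := Int.lt_zpow_succ_log_self (b := 2) (by norm_num) (A.p j : ℝ)
    rw [h3, zpow_add_one₀ (by norm_num)] at h6
    push_cast at h6
    rw [h2] at h5
    have h7 : (A.p j : ℝ) * A.lowW d ≤ 2 * 2 ^ s * A.lowW d :=
      mul_le_mul_of_nonneg_right (by linarith) hV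
    linarith
  have h1 := sum_two_zpow_le_of_injOn S a hinj _ (by positivity) hbound
  calc ∑ j ∈ S, alphaMinus A.J A.r A.p A.w A.sched A.Jimm j
      ≤ ∑ j ∈ S, 2 * (2 : ℝ) ^ a j := by
        refine Finset.sum_le_sum fun j _ => ?_
        have h6 := Int.lt_zpow_succ_log_self (b := 2) (by norm_num)
          (alphaMinus A.J A.r A.p A.w A.sched A.Jimm j)
        rw [zpow_add_one₀ (by norm_num)] at h6
        push_cast at h6
        linarith
    _ ≤ 8 * 2 ^ s * A.lowW d := by
        rw [← Finset.mul_sum]; linarith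

/-- Summing over size classes is again geometric, with the largest size controlled by
`size_le`. -/
lemma sum_class_le (d : ℤ) :
    ∑ j ∈ A.firstMinus with cls A.p A.w j = d,
      alphaMinus A.J A.r A.p A.w A.sched A.Jimm j ≤
        16 * A.ε * (2 ^ (-d) * A.lowW d ^ 2) := by
  set S := A.firstMinus.filter (fun j => cls A.p A.w j = d) with hS
  have hV := A.lowW_nonneg d
  have hε := A.hε
  set T := S.image (fun j => Int.log 2 (A.p j : ℝ)) with hT
  have hgeom : ∑ s ∈ T, (2 : ℝ) ^ s ≤ 2 * (A.ε * A.lowW d * 2 ^ (-d)) := by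
    refine sum_two_zpow_le_of_injOn T id (Set.injOn_id _) _ (by positivity) ?_
    intro s hs
    obtain ⟨j, hj, rfl⟩ := Finset.mem_image.1 hs
    obtain ⟨h1, h2⟩ := Finset.mem_filter.1 hj
    have hp : (0 : ℝ) < A.p j := by exact_mod_cast A.hp j (A.mem_J_of_first h1)
    have h3 := Int.zpow_log_le_self (b := 2) (by norm_num) hp
    have h4 := A.size_le h1
    rw [h2] at h4
    push_cast at h3
    exact h3.trans h4
  rw [← Finset.sum_fiberwise_of_maps_to (s := S) (t := T)
    (g := fun j => Int.log 2 (A.p j : ℝ)) (fun x hx => Finset.mem_image_of_mem _ hx)]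
  calc _ ≤ ∑ s ∈ T, 8 * 2 ^ s * A.lowW d := by
        refine Finset.sum_le_sum fun s _ => ?_
        rw [hS, Finset.filter_filter]
        exact A.sum_class_size_le d s
    _ = 8 * A.lowW d * ∑ s ∈ T, (2 : ℝ) ^ s := by
        rw [Finset.mul_sum]
        exact Finset.sum_congr rfl fun s _ => by ring
    _ ≤ 8 * A.lowW d * (2 * (A.ε * A.lowW d * 2 ^ (-d))) :=
        mul_le_mul_of_nonneg_left hgeom (by positivity)
    _ = _ := by ring

lemma sum_first_le :
    ∑ j ∈ A.firstMinus, alphaMinus A.J A.r A.p A.w A.sched A.Jimm j ≤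
      192 * A.ε * ∑ d ∈ A.classes,
        Pmax A.J A.r A.p A.w A.sched A.Jimm d * Wmax A.J A.r A.p A.w A.sched A.Jimm d := by
  have hε := A.hε
  rw [← Finset.sum_fiberwise_of_maps_to (t := A.classes) (g := cls A.p A.w)
    (fun x hx => Finset.mem_image_of_mem _ (A.mem_J_of_first hx))]
  have hardyA := hardy A.classes (fun d => Wmax A.J A.r A.p A.w A.sched A.Jimm d)
  have hPW : ∑ d ∈ A.classes, (2 : ℝ) ^ (-d) * Wmax A.J A.r A.p A.w A.sched A.Jimm d ^ 2 ≤
      2 * ∑ d ∈ A.classes,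
        Pmax A.J A.r A.p A.w A.sched A.Jimm d * Wmax A.J A.r A.p A.w A.sched A.Jimm d := by
    rw [Finset.mul_sum]
    refine Finset.sum_le_sum fun d _ => ?_
    have h1 := mul_le_mul_of_nonneg_right (A.Wmax_le_Pmax d) (A.Wmax_nonneg d)
    rw [zpow_neg, inv_mul_le_iff₀ (by positivity)]
    nlinarith
  calc _ ≤ ∑ d ∈ A.classes, 16 * A.ε * ((2 : ℝ) ^ (-d) * A.lowW d ^ 2) :=
        Finset.sum_le_sum fun d _ => A.sum_class_le d
    _ = 16 * A.ε * ∑ d ∈ A.classes, (2 : ℝ) ^ (-d) * A.lowW d ^ 2 := by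
        rw [Finset.mul_sum]
    _ ≤ 16 * A.ε * (12 * ∑ d ∈ A.classes,
        Pmax A.J A.r A.p A.w A.sched A.Jimm d * Wmax A.J A.r A.p A.w A.sched A.Jimm d) := by
        refine mul_le_mul_of_nonneg_left ?_ (by positivity)
        refine hardyA.trans ?_
        linarith
    _ = _ := by ring

end AlgA

/-- If `J₁⁻` is the set of jobs of `J⁻` that are the first job ever
assigned to their bucket of table `T⁻`, then `∑_{j∈J₁⁻} α_j⁻ ≤ c·ε·∑_δ P^δ·W^δ` for an
absolute constant `c`, the sum ranging over all integer density classes `δ`. -/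
theorem alphaMinus_first_le_PW :
    ∃ c : ℝ, 0 < c ∧ ∀ A : AlgA,
      ∑ j ∈ (Jminus A.J A.r A.p A.w A.sched A.Jimm A.ε).filter
          (fun j => rankMinus A.J A.r A.p A.w A.sched A.Jimm A.ε j = 1),
          alphaMinus A.J A.r A.p A.w A.sched A.Jimm j ≤
        c * A.ε * ∑' δ : ℤ,
          Pmax A.J A.r A.p A.w A.sched A.Jimm δ * Wmax A.J A.r A.p A.w A.sched A.Jimm δ := by
  refine ⟨192, by norm_num, fun A => ?_⟩
  rw [tsum_eq_sum (s := A.classes) (fun d hd => by rw [A.Wmax_eq_zero hd, mul_zero])]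
  exact A.sum_first_le

end NPSched
end
end

section
/- For any ε' > 0, ∑_{j∈J^imm} α_j − 2ε'·∑_{j∈J} α_j − (2/ε)·∑_{j∈J} w_j·p_j ≤ F^{O,1+ε'}, where F^{O,1+ε'} is the minimum total fractional weighted flow-time over schedules of a machine that may process (1+ε') units of work per slot and completes every job of J. -/
/-!
The bound is a dual-fitting argument for the LP of preemptive fractional flow time at speed
`σ = 1 + ε'`. Let `W(t)` be the total remaining weight of the accepted jobs under `A`.

* Lower bound on the competitor. The sum `∑ min(ρ_i, ρ_j) p_i(t)` over the accepted jobs `i` that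
  arrived before `j` loses at most `ρ_j` per slot and is at most `W(t)`, while `p_j` times its value
  at `r_j` is `α_j - w_j p_j / 2`. So `(α_j - w_j p_j / 2) / p_j ≤ ρ_j (t - r_j) + W(t)` for all
  `t ≥ r_j` (`dual_feasible`), and weak duality (`weak_duality`) gives
  `∑_J α_j - ½ ∑_J w_j p_j ≤ F^{O,σ} + σ ∑_t W(t)`.
* Upper bound on the algorithm (`flow_le`). The potential
  `½ ∑_{i,i'} min(ρ_i, ρ_i') p_i(t) p_i'(t)` rises by exactly `α_j` when an accepted job `j`
  arrives. If `h` is processed, it drops by `∑_i min(ρ_i, ρ_h) p_i(t) - ρ_h / 2`, which misses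
  `W(t)` by at most `w_h / ε + w_h / 2`, since `h` is non-preemptible only until weight `w_h / ε` has
  been released after its start (`loss_le`). Hence
  `∑_t W(t) ≤ ∑_{accepted} α_j + (1/ε + 1/2) ∑_J w_j p_j`.

For `ε' ≥ 1/2` the claim is trivial. For `ε' < 1/2` the two bounds combine, using
`α_j ≥ w_j p_j / 2` and `1/ε ≥ 2` (an integer whose square is at least `2`).
-/

open Finset
open scoped Classical

noncomputable section

namespace NPSched

/-- Remaining size of job `j` at time `t` under schedule `osched` on a machine of
speed `σ` (which processes `σ` units of work of the scheduled job per slot). -/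
def srem (p : ℕ → ℕ) (σ : ℝ) (osched : ℕ → Option ℕ) (j t : ℕ) : ℝ :=
  max 0 ((p j : ℝ) - σ * ((Finset.range t).filter fun t' => osched t' = some j).card)

/-- Remaining weight of job `j` at time `t` on a speed-`σ` machine. -/
def swrem (p : ℕ → ℕ) (w : ℕ → ℝ) (σ : ℝ) (osched : ℕ → Option ℕ) (j t : ℕ) : ℝ :=
  den p w j * srem p σ osched j t

/-- Fractional weighted flow time of job `j` on a speed-`σ` machine. -/
def sFracFlow (r p : ℕ → ℕ) (w : ℕ → ℝ) (σ : ℝ) (osched : ℕ → Option ℕ) (j : ℕ) : ℝ :=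
  ∑' t : ℕ, if r j ≤ t then swrem p w σ osched j t else 0

/-- A valid (preemptive) schedule on a machine of speed `σ` for the instance
`(J, r, p)`: it only processes released, unfinished jobs of `J`, and completes
every job of `J`. -/
def SpeedValid (J : Finset ℕ) (r p : ℕ → ℕ) (σ : ℝ) (osched : ℕ → Option ℕ) : Prop :=
  (∀ t j, osched t = some j → j ∈ J ∧ r j ≤ t ∧ 0 < srem p σ osched j t) ∧
  ∀ j ∈ J, ∃ T, srem p σ osched j T = 0

/-! ### The schedule of the algorithm -/

section
variable (A : AlgA)

/-- The jobs accepted by the algorithm and released by time `t` (finished or not). -/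
def accepted (t : ℕ) : Finset ℕ := A.J.filter fun i => i ∉ A.Jimm ∧ A.r i ≤ t

/-- The accepted jobs that arrive strictly before `j`. -/
def earlier (j : ℕ) : Finset ℕ :=
  A.J.filter fun i => i ∉ A.Jimm ∧ (A.r i < A.r j ∨ (A.r i = A.r j ∧ i < j))

/-- The remaining size of job `i` at time `t` as a real number. -/
def q (i t : ℕ) : ℝ := rem A.p A.sched i t

/-- The smaller of the densities of `i` and `j`. -/
def md (i j : ℕ) : ℝ := min (den A.p A.w i) (den A.p A.w j)

/-- The total remaining weight of the accepted released jobs. -/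
def W (t : ℕ) : ℝ := ∑ i ∈ accepted A t, den A.p A.w i * q A i t

/-- The part of the potential `½ ∑_{i,i'} min(ρ_i, ρ_i') p_i(t) p_i'(t)` made of the pairs whose
later job is `i`, together with the diagonal term of `i`. -/
def G (i t : ℕ) : ℝ :=
  q A i t * (∑ i' ∈ earlier A i, md A i' i * q A i' t) + den A.p A.w i * q A i t ^ 2 / 2

variable {A}

lemma rem_anti (j : ℕ) {s t : ℕ} (h : s ≤ t) : rem A.p A.sched j t ≤ rem A.p A.sched j s := by
  unfold rem
  apply Nat.sub_le_sub_left
  apply card_le_card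
  intro x hx
  simp only [mem_filter, mem_range] at hx ⊢
  exact ⟨by omega, hx.2⟩

lemma q_nonneg (i t : ℕ) : 0 ≤ q A i t := Nat.cast_nonneg _

lemma q_le (i t : ℕ) : q A i t ≤ A.p i := by
  unfold q rem
  exact_mod_cast Nat.sub_le _ _

lemma den_pos {j : ℕ} (hj : j ∈ A.J) : 0 < den A.p A.w j :=
  div_pos (A.hw j hj) (by exact_mod_cast A.hp j hj)

lemma den_mul {j : ℕ} (hj : j ∈ A.J) : den A.p A.w j * A.p j = A.w j := by
  have : (A.p j : ℝ) ≠ 0 := by exact_mod_cast (A.hp j hj).ne'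
  unfold den
  field_simp

lemma md_nonneg {i j : ℕ} (hi : i ∈ A.J) (hj : j ∈ A.J) : 0 ≤ md A i j :=
  le_min (den_pos hi).le (den_pos hj).le

lemma q_succ_of_ne {i t : ℕ} (h : A.sched t ≠ some i) : q A i (t + 1) = q A i t := by
  unfold q rem
  rw [range_add_one, filter_insert, if_neg h]

lemma q_succ_of_eq {i t : ℕ} (h : A.sched t = some i) : q A i (t + 1) = q A i t - 1 := by
  have h1 := (mem_filter.1 (A.hvalid t i h)).2.2.2
  unfold q
  have : rem A.p A.sched i (t + 1) + 1 = rem A.p A.sched i t := by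
    unfold rem at h1 ⊢
    rw [range_add_one, filter_insert, if_pos h, card_insert_of_notMem (by simp)]
    omega
  rw [← this]
  push_cast
  ring

lemma q_release (i : ℕ) : q A i (A.r i) = A.p i := by
  unfold q rem
  rw [filter_eq_empty_iff.2]
  · simp
  · intro t ht h
    have := (mem_filter.1 (A.hvalid t i h)).2.1
    simp at ht
    omega

lemma sched_accepted {t h : ℕ} (hs : A.sched t = some h) : h ∈ accepted A t := by
  have := mem_filter.1 (A.hvalid t h hs)
  exact mem_filter.2 ⟨this.1, this.2.2.1, this.2.1⟩

lemma W_nonneg (t : ℕ) : 0 ≤ W A t :=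
  sum_nonneg fun _ hi => mul_nonneg (den_pos (mem_filter.1 hi).1).le (q_nonneg _ _)

lemma alpha_eq (j : ℕ) (hj : j ∈ A.J) : alpha A.J A.r A.p A.w A.sched A.Jimm j =
    A.p j * (∑ i ∈ earlier A j, md A i j * q A i (A.r j)) + A.w j * A.p j / 2 := by
  have key : ∑ i ∈ earlier A j, md A i j * q A i (A.r j) =
      ∑ i ∈ arrSet A.J A.r A.p A.sched A.Jimm j, md A i j * q A i (A.r j) := by
    symm
    apply sum_subset
    · intro i hi
      simp only [arrSet, earlier, mem_filter] at hi ⊢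
      tauto
    · intro i hi hn
      simp only [arrSet, earlier, mem_filter] at hi hn
      have : rem A.p A.sched i (A.r j) = 0 := by
        by_contra h0
        exact hn ⟨hi.1, hi.2.2, hi.2.1, by omega⟩
      simp [q, this]
  rw [key, ← sum_filter_add_sum_filter_not _ (fun i => den A.p A.w j ≤ den A.p A.w i)]
  unfold alpha
  have e1 : ∑ i ∈ (arrSet A.J A.r A.p A.sched A.Jimm j).filter
        (fun i => den A.p A.w j ≤ den A.p A.w i), md A i j * q A i (A.r j) =
      den A.p A.w j * ∑ i ∈ (arrSet A.J A.r A.p A.sched A.Jimm j).filter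
        (fun i => den A.p A.w j ≤ den A.p A.w i), (rem A.p A.sched i (A.r j) : ℝ) := by
    rw [mul_sum]
    refine sum_congr rfl fun i hi => ?_
    rw [md, min_eq_right (mem_filter.1 hi).2, q]
  have e2 : ∑ i ∈ (arrSet A.J A.r A.p A.sched A.Jimm j).filter
        (fun i => ¬ den A.p A.w j ≤ den A.p A.w i), md A i j * q A i (A.r j) =
      ∑ i ∈ (arrSet A.J A.r A.p A.sched A.Jimm j).filter
        (fun i => den A.p A.w i < den A.p A.w j), wrem A.p A.w A.sched i (A.r j) := by
    simp only [not_le]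
    refine sum_congr rfl fun _ hi => ?_
    rw [md, min_eq_left (mem_filter.1 hi).2.le, q, wrem]
  rw [e1, e2, ← den_mul hj]
  ring

lemma earlier_subset {j t : ℕ} (hj : A.r j ≤ t) : earlier A j ⊆ accepted A t := by
  intro i hi
  simp only [earlier, accepted, mem_filter] at hi ⊢
  exact ⟨hi.1, hi.2.1, by omega⟩

lemma half_le_alpha {j : ℕ} (hj : j ∈ A.J) :
    A.w j * A.p j / 2 ≤ alpha A.J A.r A.p A.w A.sched A.Jimm j := by
  rw [alpha_eq j hj]
  have : 0 ≤ ∑ i ∈ earlier A j, md A i j * q A i (A.r j) :=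
    sum_nonneg fun i hi => mul_nonneg (md_nonneg (mem_filter.1 hi).1 hj) (q_nonneg _ _)
  have := mul_nonneg (Nat.cast_nonneg (α := ℝ) (A.p j)) this
  linarith

lemma G_release {j : ℕ} (hj : j ∈ A.J) :
    G A j (A.r j) = alpha A.J A.r A.p A.w A.sched A.Jimm j := by
  rw [alpha_eq j hj, G, q_release, ← den_mul hj]
  ring

/-! ### Loss against highest-density-first -/

/-- The running job is a densest active job unless it merely continues as a non-preemptible job. -/
lemma densest {t h : ℕ} (hs : A.sched t = some h)
    (hc : h ∈ A.L t ∨ ∀ u, t = u + 1 → A.sched u ≠ some h) :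
    ∀ i ∈ activeAt A.J A.r A.p A.sched A.Jimm t, den A.p A.w i ≤ den A.p A.w h := by
  have fin : ((activeAt A.J A.r A.p A.sched A.Jimm t = ∅ ∧ A.sched t = none) ∨
      ∃ j, A.sched t = some j ∧
        ∀ j' ∈ activeAt A.J A.r A.p A.sched A.Jimm t, den A.p A.w j' ≤ den A.p A.w j) := by
    rcases t with _ | u
    · exact A.hHDF0
    · apply A.hHDFsucc u
      intro j hj
      by_contra! hcon
      have h1 := A.hcont u j hj (by omega) hcon.2
      obtain rfl : j = h := by simpa [hs] using h1.symm
      rcases hc with hc | hc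
      · exact hcon.2 hc
      · exact hc u rfl hj
  rcases fin with ⟨_, h1⟩ | ⟨j, h1, h2⟩
  · simp [hs] at h1
  · obtain rfl : j = h := by simpa [hs] using h1.symm
    exact h2

lemma none_active {t : ℕ} (hs : A.sched t = none) :
    activeAt A.J A.r A.p A.sched A.Jimm t = ∅ := by
  rcases t with _ | u
  · rcases A.hHDF0 with h | ⟨j, h, _⟩
    · exact h.1
    · simp [hs] at h
  · have := A.hHDFsucc u (by
      intro j hj
      by_contra! hcon
      have h1 := A.hcont u j hj (by omega) hcon.2
      simp [hs] at h1)
    rcases this with h | ⟨j, h, _⟩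
    · exact h.1
    · simp [hs] at h

lemma q_eq_zero_of_not_active {i t : ℕ} (hi : i ∈ accepted A t)
    (h : i ∉ activeAt A.J A.r A.p A.sched A.Jimm t) : q A i t = 0 := by
  simp only [accepted, activeAt, mem_filter] at hi h
  have : rem A.p A.sched i t = 0 := by
    by_contra h0
    exact h ⟨hi.1, hi.2.2, hi.2.1, by omega⟩
  simp [q, this]

lemma L_mono (h : ℕ) {s t : ℕ} (hst : s ≤ t) (hs : h ∈ A.L s) : h ∈ A.L t := by
  induction t, hst using Nat.le_induction with
  | base => exact hs
  | succ n _ ih => exact (A.hLsucc n h).2 (Or.inl ih)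

/-- The excess density of the jobs delayed by the running job `h` is bounded by `w_h / ε`: while
`h` is non-preemptible, every denser active job was released after `h` started, and the weight
released since then is at most `w_h / ε`. -/
lemma loss_le {t h : ℕ} (hs : A.sched t = some h) :
    ∑ i ∈ accepted A t, max (den A.p A.w i - den A.p A.w h) 0 * q A i t ≤ A.w h / A.ε := by
  have hhJ : h ∈ A.J := (mem_filter.1 (sched_accepted hs)).1
  have hpos : 0 ≤ A.w h / A.ε := (div_pos (A.hw h hhJ) A.hε).le
  by_cases hL : h ∈ A.L t
  · refine le_trans (le_of_eq (sum_eq_zero fun i hi => ?_)) hpos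
    by_cases ha : i ∈ activeAt A.J A.r A.p A.sched A.Jimm t
    · rw [max_eq_right (by linarith [densest hs (Or.inl hL) i ha]), zero_mul]
    · rw [q_eq_zero_of_not_active hi ha, mul_zero]
  have hex : ∃ s, A.sched s = some h := ⟨t, hs⟩
  set s := Nat.find hex with hsdef
  have hss : A.sched s = some h := Nat.find_spec hex
  have hmin : ∀ u < s, A.sched u ≠ some h := fun u hu => Nat.find_min hex hu
  have hst : s ≤ t := Nat.find_min' hex hs
  have hdens := densest hss (Or.inr fun u hu => hmin u (by omega))
  have hrun : ∀ u, s ≤ u → u ≤ t → A.sched u = some h := by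
    intro u hu
    induction u, hu using Nat.le_induction with
    | base => exact fun _ => hss
    | succ n hn ih =>
      intro hnt
      refine A.hcont n h (ih (by omega)) ?_ (fun hc => hL (L_mono h hnt hc))
      exact lt_of_lt_of_le (mem_filter.1 (A.hvalid t h hs)).2.2.2 (rem_anti h hnt)
  have hrel : ∑ j' ∈ A.J.filter (fun j' => s < A.r j' ∧ A.r j' ≤ t), A.w j' ≤ A.w h / A.ε := by
    rcases hst.eq_or_lt with he | hlt
    · rw [filter_eq_empty_iff.2 (fun x _ => by omega)]
      simpa using hpos
    · obtain ⟨u, rfl⟩ : ∃ u, t = u + 1 := ⟨t - 1, by omega⟩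
      by_contra! hcon
      exact hL ((A.hLsucc u h).2 (Or.inr ⟨hrun u (by omega) (by omega), s, ⟨hss, hmin⟩, hcon⟩))
  refine le_trans ?_ hrel
  calc ∑ i ∈ accepted A t, max (den A.p A.w i - den A.p A.w h) 0 * q A i t
      ≤ ∑ i ∈ accepted A t, (if s < A.r i then A.w i else 0) := by
        refine sum_le_sum fun i hi => ?_
        have hi' := mem_filter.1 hi
        split_ifs with hri
        · have h1 : max (den A.p A.w i - den A.p A.w h) 0 ≤ den A.p A.w i :=
            max_le (by linarith [den_pos hhJ]) (den_pos hi'.1).le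
          calc _ ≤ den A.p A.w i * A.p i :=
                mul_le_mul h1 (q_le _ _) (q_nonneg _ _) (den_pos hi'.1).le
            _ = A.w i := den_mul hi'.1
        · apply le_of_eq
          by_cases ha : i ∈ activeAt A.J A.r A.p A.sched A.Jimm t
          · have ha' := mem_filter.1 ha
            have : i ∈ activeAt A.J A.r A.p A.sched A.Jimm s :=
              mem_filter.2 ⟨hi'.1, by omega, hi'.2.1,
                lt_of_lt_of_le ha'.2.2.2 (rem_anti i hst)⟩
            rw [max_eq_right (by linarith [hdens i this]), zero_mul]
          · rw [q_eq_zero_of_not_active hi ha, mul_zero]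
    _ = ∑ i ∈ (accepted A t).filter (fun i => s < A.r i), A.w i := (sum_filter _ _).symm
    _ ≤ _ := by
        apply sum_le_sum_of_subset_of_nonneg
        · intro i hi
          simp only [accepted, mem_filter] at hi ⊢
          tauto
        · intro i hi _
          exact (A.hw i (mem_filter.1 hi).1).le

/-! ### Flow time of the algorithm -/

/-- Processing `h` for one slot lowers the potential by `∑ min(ρ_i, ρ_h) p_i(t) - ρ_h / 2`. -/
lemma potential_step {t h : ℕ} (hs : A.sched t = some h) :
    ∑ i ∈ accepted A t, (G A i t - G A i (t + 1)) =
      ∑ i ∈ accepted A t, md A i h * q A i t - den A.p A.w h / 2 := by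
  have hh := sched_accepted hs
  have hh' := mem_filter.1 hh
  have hne : ∀ i, i ≠ h → q A i (t + 1) = q A i t := fun i hi =>
    q_succ_of_ne (by rw [hs]; simpa using hi.symm)
  have hirr : h ∉ earlier A h := by simp [earlier]
  rw [← add_sum_erase _ _ hh, ← add_sum_erase _ (fun i => md A i h * q A i t) hh]
  have e1 : G A h t - G A h (t + 1) =
      ∑ i ∈ (accepted A t).erase h, (if i ∈ earlier A h then md A i h * q A i t else 0) +
        den A.p A.w h * q A h t - den A.p A.w h / 2 := by
    have e0 : ∑ i ∈ earlier A h, md A i h * q A i (t + 1) =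
        ∑ i ∈ earlier A h, md A i h * q A i t :=
      sum_congr rfl fun i hi => by rw [hne i (fun he => hirr (he ▸ hi))]
    have e2 : ∑ i ∈ (accepted A t).erase h, (if i ∈ earlier A h then md A i h * q A i t else 0) =
        ∑ i ∈ earlier A h, md A i h * q A i t := by
      rw [← sum_filter]
      refine sum_congr ?_ fun _ _ => rfl
      ext i
      simp only [mem_filter, mem_erase]
      exact ⟨fun h => h.2, fun hi => ⟨⟨fun he => hirr (he ▸ hi),
        earlier_subset hh'.2.2 hi⟩, hi⟩⟩
    rw [e2, G, G, e0, q_succ_of_eq hs]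
    ring
  have e3 : ∀ i ∈ (accepted A t).erase h, G A i t - G A i (t + 1) =
      md A i h * q A i t - (if i ∈ earlier A h then md A i h * q A i t else 0) := by
    intro i hi
    rw [mem_erase] at hi
    have hi' := mem_filter.1 hi.2
    rw [G, G, hne i hi.1]
    by_cases hb : i ∈ earlier A h
    · have hnb : h ∉ earlier A i := by
        simp only [earlier, mem_filter] at hb ⊢
        omega
      have e4 : ∑ i' ∈ earlier A i, md A i' i * q A i' (t + 1) =
          ∑ i' ∈ earlier A i, md A i' i * q A i' t :=
        sum_congr rfl fun i' hi' => by rw [hne i' (fun he => hnb (he ▸ hi'))]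
      rw [e4, if_pos hb]
      ring
    · have hbb : h ∈ earlier A i := by
        simp only [earlier, mem_filter] at hb ⊢
        have := hi.1
        refine ⟨hh'.1, hh'.2.1, ?_⟩
        have hn : ¬ (A.r i < A.r h ∨ (A.r i = A.r h ∧ i < h)) :=
          fun hc => hb ⟨hi'.1, hi'.2.1, hc⟩
        omega
      have e4 : ∑ i' ∈ (earlier A i).erase h, md A i' i * q A i' (t + 1) =
          ∑ i' ∈ (earlier A i).erase h, md A i' i * q A i' t :=
        sum_congr rfl fun i' hi' => by rw [hne i' (mem_erase.1 hi').1]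
      rw [← add_sum_erase _ _ hbb, ← add_sum_erase _ (fun i' => md A i' i * q A i' (t + 1)) hbb,
        e4, if_neg hb, q_succ_of_eq hs]
      have : md A h i = md A i h := min_comm _ _
      rw [this]
      ring
  rw [e1, sum_congr rfl e3, sum_sub_distrib]
  have : md A h h = den A.p A.w h := min_self _
  rw [this]
  ring

/-- In each slot the remaining weight is paid for by the drop of the potential, up to a charge of
`w_h (1/ε + 1/2)` to the job `h` being processed. -/
lemma W_step (t : ℕ) : W A t ≤ ∑ i ∈ accepted A t, (G A i t - G A i (t + 1)) +
    ∑ i ∈ accepted A t, (q A i t - q A i (t + 1)) * (A.w i * (1 / A.ε + 1 / 2)) := by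
  rcases hs : A.sched t with _ | h
  · have hz : W A t = 0 := sum_eq_zero fun i hi => by
      rw [q_eq_zero_of_not_active hi (by simp [none_active hs]), mul_zero]
    have hq : ∀ i, q A i (t + 1) = q A i t := fun i => q_succ_of_ne (by simp [hs])
    rw [hz]
    simp [G, hq]
  · have hh := sched_accepted hs
    have hhJ : h ∈ A.J := (mem_filter.1 hh).1
    rw [potential_step hs]
    have e1 : ∑ i ∈ accepted A t, (q A i t - q A i (t + 1)) * (A.w i * (1 / A.ε + 1 / 2)) =
        A.w h * (1 / A.ε + 1 / 2) := by
      rw [sum_eq_single_of_mem h hh, q_succ_of_eq hs]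
      · ring
      · intro i _ hi
        rw [q_succ_of_ne (by rw [hs]; simpa using hi.symm)]
        ring
    have e2 : W A t = ∑ i ∈ accepted A t, md A i h * q A i t +
        ∑ i ∈ accepted A t, max (den A.p A.w i - den A.p A.w h) 0 * q A i t := by
      rw [W, ← sum_add_distrib]
      refine sum_congr rfl fun i _ => ?_
      rw [← add_mul]
      congr 1
      rw [md]
      rcases le_total (den A.p A.w i) (den A.p A.w h) with hle | hle
      · rw [min_eq_left hle, max_eq_right (by linarith)]; ring
      · rw [min_eq_right hle, max_eq_left (by linarith)]; ring
    have e3 := loss_le hs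
    have e4 : den A.p A.w h ≤ A.w h := by
      have h1 : (1 : ℝ) ≤ A.p h := by exact_mod_cast A.hp h hhJ
      have h2 := mul_le_mul_of_nonneg_left h1 (den_pos hhJ).le
      rw [den_mul hhJ] at h2
      linarith
    rw [e1, e2]
    have : A.w h * (1 / A.ε + 1 / 2) = A.w h / A.ε + A.w h / 2 := by ring
    linarith

lemma sum_ite_telescope (f : ℕ → ℝ) {r T : ℕ} (h : r ≤ T) :
    ∑ t ∈ range T, (if r ≤ t then f t - f (t + 1) else 0) = f r - f T := by
  induction T, h using Nat.le_induction with
  | base =>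
    rw [sub_self]
    exact sum_eq_zero fun t ht => if_neg (by simp at ht; omega)
  | succ n hn ih =>
    rw [sum_range_succ, ih, if_pos hn]
    ring

lemma sum_accepted (f : ℕ → ℕ → ℝ) (T : ℕ) : ∑ t ∈ range T, ∑ i ∈ accepted A t, f i t =
    ∑ i ∈ A.J.filter (fun i => i ∉ A.Jimm), ∑ t ∈ range T, if A.r i ≤ t then f i t else 0 := by
  rw [sum_comm]
  refine sum_congr rfl fun t _ => ?_
  rw [← sum_filter, accepted, filter_filter]

lemma flow_le {T : ℕ} (hT : ∀ j ∈ A.J, A.r j ≤ T)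
    (hT' : ∀ j ∈ A.J, j ∉ A.Jimm → rem A.p A.sched j T = 0) :
    ∑ t ∈ range T, W A t ≤
      ∑ j ∈ A.J.filter (fun i => i ∉ A.Jimm), alpha A.J A.r A.p A.w A.sched A.Jimm j +
      (1 / A.ε + 1 / 2) * ∑ j ∈ A.J, A.w j * A.p j := by
  refine (sum_le_sum fun t _ => W_step t).trans ?_
  rw [sum_add_distrib, sum_accepted (fun i t => G A i t - G A i (t + 1)),
    sum_accepted (fun i t => (q A i t - q A i (t + 1)) * (A.w i * (1 / A.ε + 1 / 2)))]
  refine add_le_add (le_of_eq (sum_congr rfl fun i hi => ?_)) ?_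
  · have hi' := mem_filter.1 hi
    rw [sum_ite_telescope _ (hT i hi'.1), G_release hi'.1]
    simp [G, q, hT' i hi'.1 hi'.2]
  · rw [mul_sum]
    have hc : 0 ≤ 1 / A.ε + 1 / 2 := by have := A.hε; positivity
    calc _ = ∑ i ∈ A.J.filter (fun i => i ∉ A.Jimm), (1 / A.ε + 1 / 2) * (A.w i * A.p i) := by
          refine sum_congr rfl fun i hi => ?_
          have hi' := mem_filter.1 hi
          have h1 := sum_ite_telescope (fun t => q A i t * (A.w i * (1 / A.ε + 1 / 2)))
            (hT i hi'.1)
          have h2 : q A i T = 0 := by simp [q, hT' i hi'.1 hi'.2]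
          simp only [← sub_mul, h2, q_release] at h1
          rw [h1]
          ring
      _ ≤ _ := sum_le_sum_of_subset_of_nonneg (filter_subset _ _) fun i hi _ =>
          mul_nonneg hc (mul_nonneg (A.hw i hi).le (Nat.cast_nonneg _))

/-! ### The dual constraints and the competing schedule -/

/-- Feasibility of the dual solution: each slot of the algorithm lowers
`∑_i min(ρ_i, ρ_j) p_i(t)` by at most `ρ_j`. -/
lemma dual_feasible {j t : ℕ} (hj : j ∈ A.J) (ht : A.r j ≤ t) :
    ∑ i ∈ earlier A j, md A i j * q A i (A.r j) - den A.p A.w j * ((t : ℝ) - A.r j) ≤ W A t := by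
  have h1 : ∑ i ∈ earlier A j, md A i j * q A i (A.r j) - den A.p A.w j * ((t : ℝ) - A.r j) ≤
      ∑ i ∈ earlier A j, md A i j * q A i t := by
    induction t, ht using Nat.le_induction with
    | base => simp
    | succ n hn ih =>
      have h2 : ∑ i ∈ earlier A j, md A i j * q A i n - den A.p A.w j ≤
          ∑ i ∈ earlier A j, md A i j * q A i (n + 1) := by
        rw [sub_le_iff_le_add, ← sub_le_iff_le_add', ← sum_sub_distrib]
        have h3 : ∀ i ∈ earlier A j, md A i j * q A i n - md A i j * q A i (n + 1) ≤
            if A.sched n = some i then den A.p A.w j else 0 := by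
          intro i _
          split_ifs with h
          · rw [q_succ_of_eq h]
            have : md A i j ≤ den A.p A.w j := min_le_right _ _
            linarith
          · rw [q_succ_of_ne h, sub_self]
        refine (sum_le_sum h3).trans ?_
        rcases A.sched n with _ | h
        · simpa using (den_pos hj).le
        · simp only [Option.some.injEq, sum_ite_eq]
          split_ifs
          · exact le_rfl
          · exact (den_pos hj).le
      push_cast
      linarith
  refine h1.trans ?_
  calc _ ≤ ∑ i ∈ earlier A j, den A.p A.w i * q A i t :=
        sum_le_sum fun i _ => mul_le_mul_of_nonneg_right (min_le_left _ _) (q_nonneg _ _)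
    _ ≤ _ := sum_le_sum_of_subset_of_nonneg (earlier_subset ht) fun i hi _ =>
        mul_nonneg (den_pos (mem_filter.1 hi).1).le (q_nonneg _ _)

variable {σ : ℝ} {o : ℕ → Option ℕ}

lemma srem_nonneg (j t : ℕ) : 0 ≤ srem A.p σ o j t := le_max_left _ _

lemma srem_succ_of_ne {j t : ℕ} (h : o t ≠ some j) :
    srem A.p σ o j (t + 1) = srem A.p σ o j t := by
  unfold srem
  rw [range_add_one, filter_insert, if_neg h]

lemma srem_succ_le (hσ : 0 ≤ σ) (j t : ℕ) : srem A.p σ o j (t + 1) ≤ srem A.p σ o j t := by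
  by_cases h : o t = some j
  · unfold srem
    rw [range_add_one, filter_insert, if_pos h, card_insert_of_notMem (by simp)]
    apply max_le_max le_rfl
    push_cast
    linarith
  · rw [srem_succ_of_ne h]

lemma srem_sub_le (hσ : 0 ≤ σ) (j t : ℕ) :
    srem A.p σ o j t - srem A.p σ o j (t + 1) ≤ if o t = some j then σ else 0 := by
  split_ifs with h
  · unfold srem
    rw [range_add_one, filter_insert, if_pos h, card_insert_of_notMem (by simp)]
    push_cast
    rw [sub_le_iff_le_add]
    refine max_le (add_nonneg hσ (le_max_left _ _)) ?_
    have := le_max_right (0 : ℝ) ((A.p j : ℝ) -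
      σ * (((Finset.range t).filter fun t' => o t' = some j).card + 1))
    linarith
  · rw [srem_succ_of_ne h, sub_self]

lemma srem_anti (hσ : 0 ≤ σ) (j : ℕ) : Antitone (srem A.p σ o j) :=
  antitone_nat_of_succ_le (srem_succ_le hσ j)

lemma srem_release (hO : SpeedValid A.J A.r A.p σ o) (j : ℕ) :
    srem A.p σ o j (A.r j) = A.p j := by
  unfold srem
  rw [filter_eq_empty_iff.2]
  · simp
  · intro t ht h
    have := (hO.1 t j h).2.1
    simp at ht
    omega

lemma flow_term_nonneg {j : ℕ} (hj : j ∈ A.J) (t : ℕ) :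
    0 ≤ if A.r j ≤ t then swrem A.p A.w σ o j t else 0 := by
  split_ifs
  · exact mul_nonneg (den_pos hj).le (srem_nonneg _ _)
  · exact le_rfl

lemma sum_le_sFracFlow (hσ : 0 ≤ σ) {j T : ℕ} (hj : j ∈ A.J) (hT : srem A.p σ o j T = 0) :
    ∑ t ∈ range T, (if A.r j ≤ t then swrem A.p A.w σ o j t else 0) ≤
      sFracFlow A.r A.p A.w σ o j := by
  have hz : ∀ t ∉ range T, (if A.r j ≤ t then swrem A.p A.w σ o j t else 0) = 0 := by
    intro t ht
    have h1 : srem A.p σ o j t = 0 :=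
      le_antisymm (hT ▸ srem_anti hσ j (by simpa using ht)) (srem_nonneg _ _)
    simp [swrem, h1]
  exact (tsum_eq_sum hz).ge

/-- Weak duality for one job: its dual value is paid for by its flow time in the competing
schedule and by `W` in the slots in which it is processed there. The quantity
`p_j^O(t) · (c - ρ_j (t - r_j))` telescopes. -/
lemma weak_duality (hσ : 0 ≤ σ) (hO : SpeedValid A.J A.r A.p σ o) {j T : ℕ} (hj : j ∈ A.J)
    (hr : A.r j ≤ T) (hT : srem A.p σ o j T = 0) :
    alpha A.J A.r A.p A.w A.sched A.Jimm j - A.w j * A.p j / 2 ≤ sFracFlow A.r A.p A.w σ o j +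
      ∑ t ∈ range T, (if o t = some j then σ else 0) * W A t := by
  rw [alpha_eq j hj]
  set c := ∑ i ∈ earlier A j, md A i j * q A i (A.r j) with hc
  have h1 := sum_ite_telescope
    (fun t => srem A.p σ o j t * (c - den A.p A.w j * ((t : ℝ) - A.r j))) hr
  simp only [hT, srem_release hO] at h1
  have h2 : (A.p j : ℝ) * c + A.w j * A.p j / 2 - A.w j * A.p j / 2 =
      (A.p j : ℝ) * (c - den A.p A.w j * ((A.r j : ℝ) - A.r j)) -
        0 * (c - den A.p A.w j * ((T : ℝ) - A.r j)) := by ring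
  rw [h2, ← h1]
  refine le_trans ?_ (add_le_add (sum_le_sFracFlow hσ hj hT) le_rfl)
  rw [← sum_add_distrib]
  refine sum_le_sum fun t _ => ?_
  have hW := W_nonneg (A := A) t
  by_cases hrt : A.r j ≤ t
  · simp only [if_pos hrt]
    have hx0 := srem_succ_le (A := A) (o := o) hσ j t
    have hx := srem_sub_le (A := A) (o := o) hσ j t
    have hf := dual_feasible hj hrt
    rw [← hc] at hf
    have h3 := mul_le_mul_of_nonneg_left hf (sub_nonneg.2 hx0)
    have h4 := mul_le_mul_of_nonneg_right hx hW
    have h5 := mul_le_mul_of_nonneg_left hx0 (den_pos hj).le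
    unfold swrem
    push_cast
    linarith
  · simp only [if_neg hrt, zero_add]
    exact mul_nonneg (by split_ifs <;> simp [hσ]) hW
end

/-- For any `ε' > 0`,
`∑_{j∈J^imm} α_j − 2ε'·∑_{j∈J} α_j − (2/ε)·∑_{j∈J} w_j·p_j ≤ F^{O,1+ε'}`, where
`F^{O,1+ε'}` is the minimum total fractional weighted flow-time over schedules on a
machine of speed `1+ε'` completing every job of `J` (stated for every such schedule,
hence for the optimal one). -/
theorem alpha_Jimm_le_speed_opt (A : AlgA) (ε' : ℝ) (hε' : 0 < ε')
    (osched : ℕ → Option ℕ) (hO : SpeedValid A.J A.r A.p (1 + ε') osched) :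
    (∑ j ∈ A.Jimm, alpha A.J A.r A.p A.w A.sched A.Jimm j) -
        2 * ε' * (∑ j ∈ A.J, alpha A.J A.r A.p A.w A.sched A.Jimm j) -
        (2 / A.ε) * (∑ j ∈ A.J, A.w j * A.p j) ≤
      ∑ j ∈ A.J, sFracFlow A.r A.p A.w (1 + ε') osched j := by
  have hσ : 0 ≤ 1 + ε' := by linarith
  have hsub : A.J.filter (fun i => i ∈ A.Jimm) = A.Jimm := by
    ext i
    simp only [mem_filter]
    exact ⟨fun h => h.2, fun h => ⟨((A.hJimm i).1 h).1, h⟩⟩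
  have hsplit := sum_filter_add_sum_filter_not A.J (fun i => i ∈ A.Jimm)
    (fun j => alpha A.J A.r A.p A.w A.sched A.Jimm j)
  rw [hsub] at hsplit
  have hwp : ∀ j ∈ A.J, 0 ≤ A.w j * A.p j := fun j hj =>
    mul_nonneg (A.hw j hj).le (Nat.cast_nonneg _)
  have hαS : 0 ≤ ∑ j ∈ A.J.filter (fun i => i ∉ A.Jimm),
      alpha A.J A.r A.p A.w A.sched A.Jimm j := sum_nonneg fun j hj => by
    linarith [half_le_alpha (mem_filter.1 hj).1, hwp j (mem_filter.1 hj).1]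
  have hαI : 0 ≤ ∑ j ∈ A.Jimm, alpha A.J A.r A.p A.w A.sched A.Jimm j :=
    sum_nonneg fun j hj => by
      have hj' := ((A.hJimm j).1 hj).1
      linarith [half_le_alpha hj', hwp j hj']
  have hD : 0 ≤ ∑ j ∈ A.J, A.w j * A.p j := sum_nonneg hwp
  have hF : 0 ≤ ∑ j ∈ A.J, sFracFlow A.r A.p A.w (1 + ε') osched j :=
    sum_nonneg fun _ hj => tsum_nonneg (flow_term_nonneg hj)
  have hεpos := A.hε
  have hk2 : (2 : ℝ) ≤ 1 / A.ε := by
    rw [← A.hk]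
    have h1 : (A.k : ℝ) * A.ε = 1 := by rw [A.hk]; field_simp
    have h2 : 2 ≤ A.k := by
      by_contra! hlt
      have h3 : (A.k : ℝ) ≤ 1 := by exact_mod_cast (by omega : A.k ≤ 1)
      nlinarith [A.hε2]
    exact_mod_cast h2
  rw [← hsplit, show 2 / A.ε = 2 * (1 / A.ε) by ring]
  -- for `ε' ≥ 1/2` the left-hand side is nonpositive
  by_cases hbig : 1 / 2 ≤ ε'
  · have h1 : 0 ≤ 2 * (1 / A.ε) * ∑ j ∈ A.J, A.w j * A.p j := by positivity
    nlinarith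
  push Not at hbig
  -- a time by which both schedules have finished every job
  obtain ⟨T, hT⟩ : ∃ T, ∀ j ∈ A.J, A.r j ≤ T ∧ (j ∉ A.Jimm → rem A.p A.sched j T = 0) ∧
      srem A.p (1 + ε') osched j T = 0 := by
    have h1 : ∀ j, ∃ T, j ∈ A.J → A.r j ≤ T ∧ (j ∉ A.Jimm → rem A.p A.sched j T = 0) ∧
        srem A.p (1 + ε') osched j T = 0 := by
      intro j
      by_cases hj : j ∈ A.J
      · obtain ⟨T₁, hT₁⟩ := hO.2 j hj
        have hA : ∃ T₂, j ∉ A.Jimm → rem A.p A.sched j T₂ = 0 := by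
          by_cases hI : j ∈ A.Jimm
          · exact ⟨0, fun h => absurd hI h⟩
          · exact (A.hdone j hj hI).imp fun _ h _ => h
        obtain ⟨T₂, hT₂⟩ := hA
        refine ⟨A.r j + T₁ + T₂, fun _ => ⟨by omega, fun hI => ?_, ?_⟩⟩
        · exact Nat.le_zero.1 (hT₂ hI ▸ rem_anti j (by omega))
        · exact le_antisymm (hT₁ ▸ srem_anti hσ j (by omega)) (srem_nonneg _ _)
      · exact ⟨0, fun h => absurd h hj⟩
    choose τ hτ using h1
    refine ⟨A.J.sup τ, fun j hj => ?_⟩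
    have hle : τ j ≤ A.J.sup τ := le_sup hj
    obtain ⟨a, b, c⟩ := hτ j hj
    refine ⟨a.trans hle, fun hI => ?_, ?_⟩
    · exact Nat.le_zero.1 (b hI ▸ rem_anti j hle)
    · exact le_antisymm (c ▸ srem_anti hσ j hle) (srem_nonneg _ _)
  have hflow := flow_le (fun j hj => (hT j hj).1) (fun j hj => (hT j hj).2.1)
  have hdual := sum_le_sum fun j hj =>
    weak_duality hσ hO hj (hT j hj).1 (hT j hj).2.2
  rw [sum_sub_distrib, sum_add_distrib, sum_comm, ← hsplit, ← sum_div] at hdual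
  have hspeed : ∑ t ∈ range T, ∑ j ∈ A.J, (if osched t = some j then 1 + ε' else 0) * W A t ≤
      (1 + ε') * ∑ t ∈ range T, W A t := by
    rw [mul_sum]
    refine sum_le_sum fun t _ => ?_
    rw [← sum_mul]
    refine mul_le_mul_of_nonneg_right ?_ (W_nonneg t)
    rcases osched t with _ | h
    · simpa using hσ
    · simp only [Option.some.injEq, sum_ite_eq]
      split_ifs
      · exact le_rfl
      · exact hσ
  have hhalf : (∑ j ∈ A.J, A.w j * A.p j) / 2 ≤
      ∑ j ∈ A.J, alpha A.J A.r A.p A.w A.sched A.Jimm j := by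
    rw [sum_div]
    exact sum_le_sum fun j hj => half_le_alpha hj
  rw [← hsplit] at hhalf
  have hflow' := mul_le_mul_of_nonneg_left hflow hσ
  have hfin := hdual.trans (add_le_add le_rfl (hspeed.trans hflow'))
  generalize 1 / A.ε = k at *
  generalize ∑ j ∈ A.J, A.w j * A.p j = D at *
  -- what remains after cancellation is `D (k - 1 - ε' k) ≥ D (k / 2 - 1) ≥ 0`
  have hslack : 0 ≤ D * (k - 1 - ε' * k) := mul_nonneg hD (by nlinarith)
  have hhalf' := mul_le_mul_of_nonneg_left hhalf hε'.le
  have hI := mul_nonneg hε'.le hαI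
  nlinarith

end NPSched
end
end

section
/- Let J be a finite set of jobs, each with a positive integer size p_j and positive real weight w_j, all available at time 0 (no release times). The preemptive highest-density-first schedule (in each slot, process the unfinished job of maximum density ρ_j = w_j/p_j, breaking ties in a fixed order) minimizes the total remaining weight at every time: for every integer time t and every schedule S of J, ∑_{j∈J} w_j^{HDF}(t) ≤ ∑_{j∈J} w_j^{S}(t), where w_j^{·}(t) = ρ_j·p_j^{·}(t) and p_j^{·}(t) is the remaining size of j at time t under the respective schedule. -/
/-!
The proof is a threshold argument. Suppose some job is unfinished under HDF at time `t`, and let `θ`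
be the largest density of such a job. Every job of density above `θ` is finished under HDF, so HDF
leaves at most as much of it as `S` does. The unfinished job of density `θ` was available in every
earlier slot, so HDF never processed a job of density below `θ`, and leaves at least as much of it as
`S` does. Hence `(ρ_j - θ) (p_j^HDF(t) - p_j^S(t)) ≤ 0` for every job `j`
(`exists_threshold`). Summing over `j`, the claim follows from `θ ≥ 0` and
`∑ p_j^HDF(t) ≤ ∑ p_j - t ≤ ∑ p_j^S(t)`, with truncated subtraction: HDF never idles while work
remains (`sum_rem_hdf_le`), and no schedule does more than one unit of work per slot
(`le_sum_rem`).
-/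

open Finset
open scoped Classical

noncomputable section

namespace NPSched

/-- The unfinished jobs of `J` at time `t`. -/
def unfin (J : Finset ℕ) (p : ℕ → ℕ) (sched : ℕ → Option ℕ) (t : ℕ) : Finset ℕ :=
  J.filter fun j => 0 < rem p sched j t

/-- A valid schedule of the jobs of `J` (all available at time `0`): in each slot it
processes at most one job, which must be an unfinished job of `J`. -/
def ValidSched (J : Finset ℕ) (p : ℕ → ℕ) (sched : ℕ → Option ℕ) : Prop :=
  ∀ t j, sched t = some j → j ∈ J ∧ 0 < rem p sched j t

/-- The preemptive highest-density-first schedule: a valid schedule which, in every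
slot with unfinished jobs, processes an unfinished job of maximum density
(ties broken by the fixed index order). -/
def IsHDF (J : Finset ℕ) (p : ℕ → ℕ) (w : ℕ → ℝ) (sched : ℕ → Option ℕ) : Prop :=
  ValidSched J p sched ∧
    ∀ t, unfin J p sched t = ∅ ∨
      ∃ j, sched t = some j ∧ ∀ j' ∈ unfin J p sched t,
        den p w j' ≤ den p w j ∧ (den p w j' = den p w j → j ≤ j')

theorem rem_zero (p : ℕ → ℕ) (sched : ℕ → Option ℕ) (j : ℕ) : rem p sched j 0 = p j := by
  simp [rem]

theorem rem_succ (p : ℕ → ℕ) (sched : ℕ → Option ℕ) (j t : ℕ) :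
    rem p sched j (t + 1) = rem p sched j t - if sched t = some j then 1 else 0 := by
  unfold rem
  rw [Finset.range_add_one, Finset.filter_insert]
  split_ifs with h
  · rw [Finset.card_insert_of_notMem (by simp)]
    omega
  · simp

theorem rem_antitone (p : ℕ → ℕ) (sched : ℕ → Option ℕ) (j : ℕ) :
    Antitone (rem p sched j) :=
  antitone_nat_of_succ_le fun t => by rw [rem_succ]; exact Nat.sub_le _ _

theorem rem_le (p : ℕ → ℕ) (sched : ℕ → Option ℕ) (j t : ℕ) : rem p sched j t ≤ p j :=
  Nat.sub_le _ _

/-- At most one unit of work is done per slot. -/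
theorem le_sum_rem (J : Finset ℕ) (p : ℕ → ℕ) (sched : ℕ → Option ℕ) (t : ℕ) :
    ∑ j ∈ J, p j - t ≤ ∑ j ∈ J, rem p sched j t := by
  induction t with
  | zero => simp [rem_zero]
  | succ t ih =>
    have h1 : ∑ j ∈ J, (if sched t = some j then 1 else 0) ≤ 1 := by
      cases sched t with
      | none => simp
      | some k =>
        simp only [Option.some.injEq, Finset.sum_ite_eq]
        split_ifs <;> simp
    have h2 : ∑ j ∈ J, rem p sched j t ≤
        ∑ j ∈ J, rem p sched j (t + 1) + ∑ j ∈ J, (if sched t = some j then 1 else 0) := by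
      rw [← Finset.sum_add_distrib]
      refine Finset.sum_le_sum fun j _ => ?_
      rw [rem_succ]
      omega
    omega

/-- HDF does one unit of work in every slot that starts with work remaining. -/
theorem sum_rem_hdf_le {J : Finset ℕ} {p : ℕ → ℕ} {w : ℕ → ℝ} {hdf : ℕ → Option ℕ}
    (h : IsHDF J p w hdf) (t : ℕ) :
    ∑ j ∈ J, rem p hdf j t ≤ ∑ j ∈ J, p j - t := by
  induction t with
  | zero => simp [rem_zero]
  | succ t ih =>
    have hmono : ∀ j ∈ J, rem p hdf j (t + 1) ≤ rem p hdf j t :=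
      fun j _ => rem_antitone p hdf j (Nat.le_succ t)
    rcases h.2 t with he | ⟨j, hj, -⟩
    · have h0 : ∑ j ∈ J, rem p hdf j t = 0 := by
        refine Finset.sum_eq_zero fun j hj => ?_
        have := Finset.filter_eq_empty_iff.mp he hj
        omega
      have := Finset.sum_le_sum hmono
      omega
    · obtain ⟨hjJ, hpos⟩ := h.1 t j hj
      have : ∑ j ∈ J, rem p hdf j (t + 1) < ∑ j ∈ J, rem p hdf j t := by
        refine Finset.sum_lt_sum hmono ⟨j, hjJ, ?_⟩
        rw [rem_succ, if_pos hj]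
        omega
      omega

/-- While `k` is unfinished, HDF does not touch jobs of smaller density. -/
theorem rem_hdf_eq_of_den_lt {J : Finset ℕ} {p : ℕ → ℕ} {w : ℕ → ℝ} {hdf : ℕ → Option ℕ}
    (h : IsHDF J p w hdf) {t j k : ℕ} (hk : k ∈ unfin J p hdf t)
    (hlt : den p w j < den p w k) : rem p hdf j t = p j := by
  have hkJ := Finset.mem_filter.mp hk
  have hnot : ∀ t' ∈ Finset.range t, ¬ hdf t' = some j := by
    intro t' ht' hj
    have hk' : k ∈ unfin J p hdf t' := Finset.mem_filter.mpr
      ⟨hkJ.1, hkJ.2.trans_le (rem_antitone p hdf k (Finset.mem_range.mp ht').le)⟩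
    rcases h.2 t' with he | ⟨i, hi, hmax⟩
    · simp [he] at hk'
    · obtain rfl : i = j := Option.some.inj (hi.symm.trans hj)
      exact absurd (hmax k hk').1 (not_le.mpr hlt)
  rw [rem, Finset.filter_false_of_mem hnot]
  simp

/-- The threshold inequality against an arbitrary schedule `S`. The threshold `θ` is the maximum
density of a job unfinished under HDF at time `t`, or `0` if there is none. -/
theorem exists_threshold {J : Finset ℕ} {p : ℕ → ℕ} {w : ℕ → ℝ} {hdf : ℕ → Option ℕ}
    (hw : ∀ j ∈ J, 0 < w j) (h : IsHDF J p w hdf) (S : ℕ → Option ℕ) (t : ℕ) :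
    ∃ θ : ℝ, 0 ≤ θ ∧ ∀ j ∈ J,
      (den p w j - θ) * ((rem p hdf j t : ℝ) - rem p S j t) ≤ 0 := by
  have hden : ∀ j ∈ J, 0 ≤ den p w j := fun j hj => div_nonneg (hw j hj).le (Nat.cast_nonneg _)
  have hzero : ∀ j ∈ J, j ∉ unfin J p hdf t → (rem p hdf j t : ℝ) - rem p S j t ≤ 0 := by
    intro j hj hn
    have : rem p hdf j t = 0 := by
      by_contra hne
      exact hn (Finset.mem_filter.mpr ⟨hj, Nat.pos_of_ne_zero hne⟩)
    simp [this]
  rcases (unfin J p hdf t).eq_empty_or_nonempty with he | hne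
  · refine ⟨0, le_rfl, fun j hj => ?_⟩
    rw [sub_zero]
    exact mul_nonpos_of_nonneg_of_nonpos (hden j hj) (hzero j hj (by simp [he]))
  · obtain ⟨k, hk, hmax⟩ := Finset.exists_max_image _ (den p w) hne
    refine ⟨den p w k, hden k (Finset.mem_filter.mp hk).1, fun j hj => ?_⟩
    rcases lt_trichotomy (den p w j) (den p w k) with hlt | heq | hgt
    · refine mul_nonpos_of_nonpos_of_nonneg (sub_nonpos.mpr hlt.le) ?_
      rw [rem_hdf_eq_of_den_lt h hk hlt, sub_nonneg]
      exact_mod_cast rem_le p S j t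
    · simp [heq]
    · exact mul_nonpos_of_nonneg_of_nonpos (sub_nonneg.mpr hgt.le)
        (hzero j hj fun hm => absurd (hmax j hm) (not_le.mpr hgt))

/-- The preemptive highest-density-first schedule minimizes the
total remaining weight at every integer time `t`, among all schedules of a finite
set `J` of jobs (with positive integer sizes and positive weights) available at
time `0`. -/
theorem hdf_minimizes_remaining_weight (J : Finset ℕ) (p : ℕ → ℕ) (w : ℕ → ℝ)
    (hp : ∀ j ∈ J, 0 < p j) (hw : ∀ j ∈ J, 0 < w j)
    (hdf S : ℕ → Option ℕ) (hHDF : IsHDF J p w hdf) (hS : ValidSched J p S)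
    (t : ℕ) :
    ∑ j ∈ J, wrem p w hdf j t ≤ ∑ j ∈ J, wrem p w S j t := by
  obtain ⟨θ, hθ, hj⟩ := exists_threshold hw hHDF S t
  have hsum := Finset.sum_nonpos hj
  have hwork : (∑ j ∈ J, (rem p hdf j t : ℝ)) ≤ ∑ j ∈ J, (rem p S j t : ℝ) := by
    exact_mod_cast (sum_rem_hdf_le hHDF t).trans (le_sum_rem J p S t)
  have hexp : ∑ j ∈ J, (den p w j - θ) * ((rem p hdf j t : ℝ) - rem p S j t) =
      (∑ j ∈ J, wrem p w hdf j t - ∑ j ∈ J, wrem p w S j t) -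
        θ * (∑ j ∈ J, (rem p hdf j t : ℝ) - ∑ j ∈ J, (rem p S j t : ℝ)) := by
    rw [← Finset.sum_sub_distrib, ← Finset.sum_sub_distrib, Finset.mul_sum,
      ← Finset.sum_sub_distrib]
    refine Finset.sum_congr rfl fun j _ => ?_
    unfold wrem
    ring
  nlinarith [mul_nonneg hθ (sub_nonneg.mpr hwork)]

end NPSched
end
end
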